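/- Let L be a set and C : 2^L → 2^L satisfy Cautious Monotonicity (A ⊆ B ⊆ C(A) implies C(A) ⊆ C(B)) and Weak Compactness (if C(A) = L then there is a finite B ⊆ A with C(B) = L). Then every consistent set A ⊆ L is contained in some maximal consistent set B ⊆ L. -/

import Mathlib

/-- Lindenbaum: under Cautious Monotonicity and Weak Compactness, every
consistent set extends to a maximal consistent set. -/
theorem stmt_16 {L : Type} (C : Set L → Set L)
    (hCM : ∀ A B : Set L, A ⊆ B → B ⊆ C A → C A ⊆ C B)
    (hWC : ∀ A : Set L, C A = Set.univ →
      ∃ B : Set L, B ⊆ A ∧ B.Finite ∧ C B = Set.univ) :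
    ∀ A : Set L, C A ≠ Set.univ →
      ∃ B : Set L, A ⊆ B ∧ C B ≠ Set.univ ∧
        ∀ B' : Set L, B ⊂ B' → C B' = Set.univ := by
  intro A hA
  have up : ∀ X Y : Set L, X ⊆ Y → C X = Set.univ → C Y = Set.univ := by
    intro X Y h hX
    have h1 := hCM X Y h (by rw [hX]; exact Set.subset_univ _)
    rw [hX] at h1
    exact Set.univ_subset_iff.mp h1
  obtain ⟨m, hAm, hm⟩ := zorn_subset_nonempty {X : Set L | C X ≠ Set.univ} (by
    intro c hc hchain hne
    refine ⟨⋃₀ c, ?_, fun s hs => Set.subset_sUnion_of_mem hs⟩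
    intro hU
    obtain ⟨F, hF, hfin, hCF⟩ := hWC _ hU
    obtain ⟨t, ht, hFt⟩ := DirectedOn.exists_mem_subset_of_finite_of_subset_sUnion hne
      hchain.directedOn hfin hF
    exact hc ht (up F t hFt hCF)) A hA
  refine ⟨m, hAm, hm.prop, fun B' hB => ?_⟩
  by_contra h
  exact hB.2 (hm.2 h hB.1)
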